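/- arXiv:1411.6857 — 5 statements merged into one kernel-verified Lean document; each statement's English description precedes it below -/
import Mathlib

section
/- Let p, q, r be integers with p, q, r ≥ 3, r odd, and 1/p + 1/q + 1/r < 1. Then the semi-infinite kneading sequences u_L = ((a^{p-1}b)^{(r-3)/2} a^{p-1}b^2)^∞ and v_L = b·u_L are admissible semi-infinite words; in particular u_L <lex u_R and v_L <lex v_R. -/
/-!
Write `s = p - 1`, `m = (r - 3) / 2` and `N = p (m + 1) + 1`, the period of `u_L`. Every index is
uniquely `N c + p j + i` with `j ≤ m`, `i ≤ s`, or `N c + p (m + 1)`; the letter there is `a` if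
`i < s`, and `b` if `i = s` or in the second case. So the block starts of `u_L` are the indices with
`i = 0` (an `a`-block) and those with `i = s` (a `b`-block, of length `1` if `j < m`, and `2` if `j = m`).

* At an `a`-block start with parameter `j` the shift agrees with `u_L` until it meets the double `b`,
  which it does `j` blocks earlier than `u_L` does; hence it is `≥ u_L`
  (`uL_le_shift`). It is `< u_R` because it begins with `aa` and `u_R` begins with `ab`.
* At a `b`-block start the shift is `b` followed by either a shift at an `a`-block start or a word
  beginning with `b`; hence it is `≥ v_L`. It is smaller than `v_R = b^{q-1}a⋯` immediately, unless
  it is `bba^{p-1}b⋯` and `q = 3`. Then `v_R` begins with `bbab` if `r > 3`, and with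
  `bbaab` if `r = 3`. In the last case the hypothesis `1/p + 1/q + 1/r < 1` gives `p ≥ 4`, so the shift
  begins with `bbaaa` (`bb_lt_vR`).

The block starts of `v_L = b·u_L` are `0` and the successors of block starts of `u_L`.
-/


/-- The two-letter alphabet: `false` is the letter `a`, `true` is the letter `b`;
the order on `Bool` gives `a < b`. -/
abbrev Letter := Bool

/-- The letter `a`. -/
def la : Letter := false

/-- The letter `b`. -/
def lb : Letter := true

/-- Concatenated power `x^n` of a finite word `x`. -/
def pw (x : List Letter) : ℕ → List Letter
  | 0 => []
  | n + 1 => x ++ pw x n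

/-- The semi-infinite word `x^∞` obtained by repeating the finite word `x`. -/
def per (x : List Letter) : ℕ → Letter := fun n => x.getD (n % x.length) la

/-- The semi-infinite word `c·w`: `w` prefixed by the letter `c`. -/
def pre (c : Letter) (w : ℕ → Letter) : ℕ → Letter
  | 0 => c
  | n + 1 => w n

/-- Strict lexicographic order on semi-infinite words: `w <lex w'` iff at the least
index where they differ, `w` carries `a` and `w'` carries `b`. -/
def lexLt (w w' : ℕ → Letter) : Prop :=
  ∃ n, (∀ m < n, w m = w' m) ∧ w n = la ∧ w' n = lb

/-- Non-strict lexicographic order on semi-infinite words. -/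
def lexLe (w w' : ℕ → Letter) : Prop := lexLt w w' ∨ w = w'

/-- `k` is a block start of the semi-infinite word `w`. -/
def blockStartN (w : ℕ → Letter) (k : ℕ) : Prop := k = 0 ∨ w (k - 1) ≠ w k

/-- The shift of the semi-infinite word `w` at `k`. -/
def shiftN (w : ℕ → Letter) (k : ℕ) : ℕ → Letter := fun n => w (k + n)

/-- A semi-infinite word `w` is admissible with respect to the kneading sequences
`uL, uR, vL, vR` if at every block start `k`, the shift of `w` at `k` lies in
`[uL, uR)` if it starts with `a`, and in `[vL, vR)` if it starts with `b`. -/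
def AdmissibleN (uL uR vL vR : ℕ → Letter) (w : ℕ → Letter) : Prop :=
  ∀ k, blockStartN w k →
    (w k = la → lexLe uL (shiftN w k) ∧ lexLt (shiftN w k) uR) ∧
    (w k = lb → lexLe vL (shiftN w k) ∧ lexLt (shiftN w k) vR)

/-- The kneading sequence `u_L = ((a^{p-1}b)^{(r-3)/2} a^{p-1}b²)^∞` for `r` odd. -/
def uLodd (p r : ℕ) : ℕ → Letter :=
  per (pw (List.replicate (p - 1) la ++ [lb]) ((r - 3) / 2) ++
    (List.replicate (p - 1) la ++ [lb, lb]))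

/-- The kneading sequence `v_R = ((b^{q-1}a)^{(r-3)/2} b^{q-1}a²)^∞` for `r` odd. -/
def vRodd (q r : ℕ) : ℕ → Letter :=
  per (pw (List.replicate (q - 1) lb ++ [la]) ((r - 3) / 2) ++
    (List.replicate (q - 1) lb ++ [la, la]))

/-- The kneading sequence `u_L = ((a^{p-1}b)^{(r-2)/2} a^{p-2}(ba^{p-1})^{(r-2)/2} b²)^∞`
for `r` even. -/
def uLeven (p r : ℕ) : ℕ → Letter :=
  per (pw (List.replicate (p - 1) la ++ [lb]) ((r - 2) / 2) ++
    List.replicate (p - 2) la ++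
    pw (lb :: List.replicate (p - 1) la) ((r - 2) / 2) ++ [lb, lb])

/-- The kneading sequence `v_R = ((b^{q-1}a)^{(r-2)/2} b^{q-2}(ab^{q-1})^{(r-2)/2} a²)^∞`
for `r` even. -/
def vReven (q r : ℕ) : ℕ → Letter :=
  per (pw (List.replicate (q - 1) lb ++ [la]) ((r - 2) / 2) ++
    List.replicate (q - 2) lb ++
    pw (la :: List.replicate (q - 1) lb) ((r - 2) / 2) ++ [la, la])

/-! ### Letters of the kneading sequences -/

/-- The word `((c^s d)^m c^s d^2)^∞`, the common shape of `u_L` and `v_R`, given by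
a formula for its `n`-th letter. -/
def kn (c d : Letter) (s m n : ℕ) : Letter :=
  if n % ((s + 1) * (m + 1) + 1) % (s + 1) = s ∨
    n % ((s + 1) * (m + 1) + 1) = (s + 1) * (m + 1) then d else c

theorem shiftN_zero (w : ℕ → Letter) : shiftN w 0 = w := by
  funext n
  simp [shiftN]

theorem pw_length (x : List Letter) (m : ℕ) : (pw x m).length = x.length * m := by
  induction m with
  | zero => rfl
  | succ m ih => simp only [pw, List.length_append, ih]; ring

theorem getD_period (c d : Letter) (s m : ℕ) : ∀ t, t < (s + 1) * (m + 1) + 1 →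
    (pw (List.replicate s c ++ [d]) m ++ (List.replicate s c ++ [d, d])).getD t la =
      if t % (s + 1) = s ∨ t = (s + 1) * (m + 1) then d else c := by
  induction m with
  | zero =>
    intro t ht
    simp only [pw, List.nil_append, zero_add, mul_one] at ht ⊢
    rcases lt_trichotomy t s with h | h | h
    · have h1 : t % (s + 1) = t := Nat.mod_eq_of_lt (by omega)
      rw [if_neg (by omega), List.getD_append _ _ _ _ (by simpa using h)]
      simp [List.getD, h]
    · subst h
      rw [if_pos (by left; exact Nat.mod_eq_of_lt (by omega)),
        List.getD_append_right _ _ _ _ (by simp)]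
      simp
    · obtain rfl : t = s + 1 := by omega
      rw [if_pos (by right; rfl), List.getD_append_right _ _ _ _ (by simp)]
      simp
  | succ m ih =>
    intro t ht
    simp only [pw, List.append_assoc]
    rw [← List.append_assoc]
    have hexp : (s + 1) * (m + 1 + 1) = (s + 1) * (m + 1) + (s + 1) := by ring
    by_cases h : t < s + 1
    · have h1 : t % (s + 1) = t := Nat.mod_eq_of_lt h
      have hpos : 0 < (s + 1) * (m + 1) := by positivity
      rw [List.getD_append _ _ _ _ (by simpa using h), h1]
      rcases Nat.lt_succ_iff_lt_or_eq.mp h with h2 | h2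
      · rw [if_neg (by omega), List.getD_append _ _ _ _ (by simpa using h2)]
        simp [List.getD, h2]
      · rw [if_pos (by left; exact h2), List.getD_append_right _ _ _ _ (by simp [h2])]
        simp [h2]
    · obtain ⟨t', rfl⟩ : ∃ t', t = t' + (s + 1) := ⟨t - (s + 1), by omega⟩
      rw [List.getD_append_right _ _ _ _ (by simp)]
      have h2 : t' + (s + 1) - (List.replicate s c ++ [d]).length = t' := by simp
      rw [h2, ih t' (by omega), Nat.add_mod_right, hexp]
      simp only [add_left_inj]

theorem per_eq_kn (c d : Letter) (s m : ℕ) :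
    per (pw (List.replicate s c ++ [d]) m ++ (List.replicate s c ++ [d, d])) = kn c d s m := by
  funext n
  have hl : (pw (List.replicate s c ++ [d]) m ++ (List.replicate s c ++ [d, d])).length
      = (s + 1) * (m + 1) + 1 := by
    simp [pw_length]; ring
  unfold per kn
  rw [hl]
  exact getD_period c d s m _ (Nat.mod_lt _ (by omega))

theorem kn_period (c d : Letter) (s m e t : ℕ) :
    kn c d s m (((s + 1) * (m + 1) + 1) * e + t) = kn c d s m t := by
  simp [kn]

theorem kn_small (c d : Letter) {s m j i : ℕ} (hj : j ≤ m) (hi : i ≤ s) :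
    kn c d s m ((s + 1) * j + i) = if i = s then d else c := by
  have h1 : (s + 1) * j ≤ (s + 1) * m := Nat.mul_le_mul_left _ hj
  have h2 : (s + 1) * (m + 1) = (s + 1) * m + (s + 1) := by ring
  have h3 : ((s + 1) * j + i) % ((s + 1) * (m + 1) + 1) = (s + 1) * j + i :=
    Nat.mod_eq_of_lt (by omega)
  have h4 : ((s + 1) * j + i) % (s + 1) = i := by
    rw [Nat.mul_add_mod]; exact Nat.mod_eq_of_lt (by omega)
  have h5 : (s + 1) * j + i ≠ (s + 1) * (m + 1) := by omega
  simp [kn, h3, h4, h5]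

theorem kn_last (c d : Letter) (s m : ℕ) : kn c d s m ((s + 1) * (m + 1)) = d := by
  unfold kn
  rw [if_pos]
  right
  exact Nat.mod_eq_of_lt (by omega)

/-! ### Block starts -/

/-- Coordinates for an index: period `e`, block `j`, position `i` in the block, or else the last
position of period `e`. -/
theorem index_cases (s m k : ℕ) :
    (∃ e j i, j ≤ m ∧ i ≤ s ∧ k = ((s + 1) * (m + 1) + 1) * e + ((s + 1) * j + i)) ∨
    (∃ e, k = ((s + 1) * (m + 1) + 1) * e + (s + 1) * (m + 1)) := by
  have hk := Nat.div_add_mod k ((s + 1) * (m + 1) + 1)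
  have hlt : k % ((s + 1) * (m + 1) + 1) < (s + 1) * (m + 1) + 1 := Nat.mod_lt _ (by omega)
  generalize k % ((s + 1) * (m + 1) + 1) = t at hk hlt
  generalize k / ((s + 1) * (m + 1) + 1) = e at hk
  rcases Nat.lt_succ_iff_lt_or_eq.mp hlt with h | h
  · left
    refine ⟨e, t / (s + 1), t % (s + 1), ?_, ?_, ?_⟩
    rotate_left 2
    · rw [Nat.div_add_mod]; exact hk.symm
    · have := (Nat.div_lt_iff_lt_mul (show 0 < s + 1 by omega)).mpr (by rwa [mul_comm] at h)
      omega
    · have := Nat.mod_lt t (show 0 < s + 1 by omega)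
      omega
  · right
    exact ⟨e, by rw [← hk, h]⟩

/-- The block starts of `(a^s b)^m a^s b^2` repeated: the starts of the factors `a^s` and the letters
following them. -/
theorem blockStart_cases {s m k : ℕ} (hs : 2 ≤ s) (hk : blockStartN (kn la lb s m) k) :
    ∃ e j, j ≤ m ∧ (k = ((s + 1) * (m + 1) + 1) * e + ((s + 1) * j + 0) ∨
      k = ((s + 1) * (m + 1) + 1) * e + ((s + 1) * j + s)) := by
  rcases index_cases s m k with ⟨e, j, i, hj, hi, rfl⟩ | ⟨e, rfl⟩
  · refine ⟨e, j, hj, ?_⟩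
    rcases Nat.eq_zero_or_pos i with rfl | hi0
    · left; rfl
    rcases Nat.eq_or_lt_of_le hi with rfl | his
    · right; rfl
    exfalso
    rcases hk with hk | hk
    · omega
    obtain ⟨i, rfl⟩ : ∃ i', i = i' + 1 := ⟨i - 1, by omega⟩
    apply hk
    rw [← Nat.add_assoc _ i 1, ← Nat.add_assoc _ _ 1, Nat.add_sub_cancel, Nat.add_assoc _ _ 1,
      Nat.add_assoc _ i 1, kn_period, kn_period, kn_small _ _ hj (by omega), kn_small _ _ hj hi,
      if_neg (by omega), if_neg (by omega)]
  · exfalso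
    have hexp : (s + 1) * (m + 1) = (s + 1) * m + s + 1 := by ring
    rcases hk with hk | hk
    · omega
    apply hk
    rw [kn_period, kn_last]
    have : ((s + 1) * (m + 1) + 1) * e + (s + 1) * (m + 1) - 1 =
        ((s + 1) * (m + 1) + 1) * e + ((s + 1) * m + s) := by omega
    rw [this, kn_period, kn_small _ _ le_rfl le_rfl, if_pos rfl]

theorem shift_period (s m e t : ℕ) :
    shiftN (kn la lb s m) (((s + 1) * (m + 1) + 1) * e + t) = shiftN (kn la lb s m) t := by
  funext n
  simp only [shiftN, Nat.add_assoc]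
  exact kn_period ..

/-! ### Lexicographic comparisons -/

/-- The shift of `u_L` at the start of its `j`-th factor `a^s` is at least `u_L`: the first difference
is at the second letter of `b^2`, which the shift reaches first. -/
theorem uL_le_shift {s m j : ℕ} (hs : 2 ≤ s) (hj : j ≤ m) :
    lexLe (kn la lb s m) (shiftN (kn la lb s m) ((s + 1) * j)) := by
  rcases Nat.eq_zero_or_pos j with rfl | hj0
  · right
    funext n
    simp [shiftN]
  left
  obtain ⟨d, rfl⟩ : ∃ d, m = j + d := ⟨m - j, by omega⟩
  refine ⟨(s + 1) * (d + 1), ?_, ?_, ?_⟩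
  · intro n hn
    have h1 : n / (s + 1) < d + 1 :=
      (Nat.div_lt_iff_lt_mul (show 0 < s + 1 by omega)).mpr (by rwa [mul_comm] at hn)
    have h2 : n % (s + 1) ≤ s := by
      have := Nat.mod_lt n (show 0 < s + 1 by omega)
      omega
    have h3 := Nat.div_add_mod n (s + 1)
    generalize n / (s + 1) = x at *
    generalize n % (s + 1) = i at *
    subst h3
    rw [shiftN, ← Nat.add_assoc, ← Nat.mul_add, kn_small _ _ (by omega) h2,
      kn_small _ _ (by omega) h2]
  · have := kn_small la lb (s := s) (m := j + d) (j := d + 1) (i := 0) (by omega) (by omega)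
    rw [Nat.add_zero] at this
    rw [this, if_neg (by omega)]
  · rw [shiftN, ← Nat.mul_add, ← Nat.add_assoc, kn_last]

theorem kn_zero (c d : Letter) {s m i : ℕ} (hi : i ≤ s) :
    kn c d s m i = if i = s then d else c := by
  simpa using kn_small c d (s := s) (m := m) (j := 0) (Nat.zero_le _) hi

theorem lt_uR {s s' m t : ℕ} (hs' : 2 ≤ s') (h0 : kn la lb s m t = la)
    (h1 : kn la lb s m (t + 1) = la) :
    lexLt (shiftN (kn la lb s m) t) (pre la (kn lb la s' m)) := by
  refine ⟨1, ?_, h1, ?_⟩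
  · intro n hn
    obtain rfl : n = 0 := by omega
    exact h0
  · show kn lb la s' m 0 = lb
    rw [kn_zero _ _ (by omega), if_neg (by omega)]

theorem ba_lt_vR {s' m : ℕ} {w : ℕ → Letter} (hs' : 2 ≤ s') (h0 : w 0 = lb) (h1 : w 1 = la) :
    lexLt w (kn lb la s' m) := by
  refine ⟨1, ?_, h1, ?_⟩
  · intro n hn
    obtain rfl : n = 0 := by omega
    rw [h0, kn_zero _ _ (by omega), if_neg (by omega)]
  · rw [kn_zero _ _ (by omega), if_neg (by omega)]

/-- A word `bba^s⋯` is below `v_R`. The only close case is `q = r = 3`, where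
`v_R = bbaab⋯` and `s ≥ 3` is needed. -/
theorem bb_lt_vR {s s' m : ℕ} {w : ℕ → Letter} (hs : 2 ≤ s) (hs' : 2 ≤ s')
    (hex : s' = 2 → m = 0 → 3 ≤ s) (h0 : w 0 = lb) (h1 : w 1 = lb)
    (ha : ∀ i < s, w (i + 2) = la) : lexLt w (kn lb la s' m) := by
  have v0 : kn lb la s' m 0 = lb := by rw [kn_zero _ _ (by omega), if_neg (by omega)]
  have v1 : kn lb la s' m 1 = lb := by rw [kn_zero _ _ (by omega), if_neg (by omega)]
  have w2 := ha 0 (by omega)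
  have w3 := ha 1 (by omega)
  rcases Nat.eq_or_lt_of_le hs' with rfl | hs3
  · have v2 : kn lb la 2 m 2 = la := by rw [kn_zero _ _ (by omega), if_pos rfl]
    rcases Nat.eq_zero_or_pos m with rfl | hm
    · refine ⟨4, ?_, ha 2 (hex rfl rfl), by simp [kn]⟩
      intro n hn
      have v3 : kn lb la 2 0 3 = la := by simp [kn]
      interval_cases n <;> simp_all
    · have v3 : kn lb la 2 m 3 = lb := by
        simpa using kn_small lb la (s := 2) (m := m) (j := 1) (i := 0) hm (by omega)
      refine ⟨3, ?_, w3, v3⟩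
      intro n hn
      interval_cases n <;> simp_all
  · have v2 : kn lb la s' m 2 = lb := by rw [kn_zero _ _ (by omega), if_neg (by omega)]
    refine ⟨2, ?_, w2, v2⟩
    intro n hn
    interval_cases n <;> simp_all

theorem pre_le_pre {c : Letter} {u w : ℕ → Letter} (h0 : w 0 = c)
    (h : lexLe u (fun n => w (n + 1))) : lexLe (pre c u) w := by
  rcases h with ⟨n, hn, h1, h2⟩ | h
  · left
    refine ⟨n + 1, ?_, h1, h2⟩
    rintro (_ | i) hi
    · exact h0.symm
    · exact hn i (by omega)
  · right
    funext n
    cases n with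
    | zero => exact h0.symm
    | succ n => exact congrFun h n

theorem la_ne_lb : la ≠ lb := by decide

/-! ### Admissibility -/

theorem admissible_uL {s s' m : ℕ} (hs : 2 ≤ s) (hs' : 2 ≤ s')
    (hex : s' = 2 → m = 0 → 3 ≤ s) :
    AdmissibleN (kn la lb s m) (pre la (kn lb la s' m)) (pre lb (kn la lb s m)) (kn lb la s' m)
      (kn la lb s m) := by
  intro k hk
  obtain ⟨e, j, hj, rfl | rfl⟩ := blockStart_cases hs hk
  · rw [kn_period, shift_period]
    have h0 : kn la lb s m ((s + 1) * j + 0) = la := by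
      rw [kn_small _ _ hj (by omega), if_neg (by omega)]
    refine ⟨fun _ => ⟨uL_le_shift hs hj, lt_uR hs' h0 ?_⟩, fun h => ?_⟩
    · rw [Nat.add_zero, kn_small _ _ hj (by omega), if_neg (by omega)]
    · exact absurd (h0.symm.trans h) la_ne_lb
  · rw [kn_period, shift_period]
    have h0 : kn la lb s m ((s + 1) * j + s) = lb := by
      rw [kn_small _ _ hj (by omega), if_pos rfl]
    refine ⟨fun h => absurd (h.symm.trans h0) la_ne_lb, fun _ => ?_⟩
    have hexp : (s + 1) * j + s + 1 = (s + 1) * (j + 1) := by ring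
    rcases Nat.eq_or_lt_of_le hj with rfl | hjm
    · have h1 : shiftN (kn la lb s j) ((s + 1) * j + s) 1 = lb := by
        rw [shiftN, hexp, kn_last]
      constructor
      · refine pre_le_pre h0 (Or.inl ⟨0, by simp, ?_, h1⟩)
        rw [kn_zero _ _ (by omega), if_neg (by omega)]
      · refine bb_lt_vR hs hs' hex h0 h1 fun i hi => ?_
        have : (s + 1) * j + s + (i + 2) = ((s + 1) * (j + 1) + 1) * 1 + i := by ring
        rw [shiftN, this, kn_period, kn_zero _ _ (by omega), if_neg (by omega)]
    · constructor
      · refine pre_le_pre h0 ?_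
        have : (fun n => shiftN (kn la lb s m) ((s + 1) * j + s) (n + 1)) =
            shiftN (kn la lb s m) ((s + 1) * (j + 1)) := by
          funext n
          rw [shiftN, shiftN, ← hexp]
          congr 1
          ring
        rw [this]
        exact uL_le_shift hs hjm
      · refine ba_lt_vR hs' h0 ?_
        have := kn_small la lb (s := s) (m := m) (j := j + 1) (i := 0) hjm (by omega)
        rw [shiftN, hexp, ← Nat.add_zero ((s + 1) * (j + 1)), this, if_neg (by omega)]

theorem admissible_vL {s s' m : ℕ} (hs : 2 ≤ s) (hs' : 2 ≤ s')
    (hex : s' = 2 → m = 0 → 3 ≤ s) :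
    AdmissibleN (kn la lb s m) (pre la (kn lb la s' m)) (pre lb (kn la lb s m)) (kn lb la s' m)
      (pre lb (kn la lb s m)) := by
  have hshift : ∀ k, shiftN (pre lb (kn la lb s m)) (k + 1) = shiftN (kn la lb s m) k := by
    intro k
    funext n
    rw [shiftN, Nat.add_right_comm]
    rfl
  rintro (_ | k) hk
  · rw [shiftN_zero]
    refine ⟨fun h => absurd h.symm la_ne_lb, fun _ => ⟨Or.inr rfl, ba_lt_vR hs' rfl ?_⟩⟩
    show kn la lb s m 0 = la
    rw [kn_zero _ _ (by omega), if_neg (by omega)]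
  · rw [hshift]
    refine admissible_uL hs hs' hex k ?_
    rcases k with _ | k
    · exact Or.inl rfl
    · rcases hk with hk | hk
      · omega
      · exact Or.inr hk

/-- For `p, q, r ≥ 3`, `r` odd, `1/p + 1/q + 1/r < 1`, the kneading
sequences `u_L` and `v_L = b·u_L` are admissible semi-infinite words; in particular
`u_L <lex u_R` and `v_L <lex v_R` (where `v_L = b·u_L` and `u_R = a·v_R`). -/
theorem kneading_sequences_admissible_odd (p q r : ℕ)
    (hp : 3 ≤ p) (hq : 3 ≤ q) (hr : 3 ≤ r) (hrodd : Odd r)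
    (hineq : (1 : ℝ) / p + 1 / q + 1 / r < 1) :
    AdmissibleN (uLodd p r) (pre la (vRodd q r)) (pre lb (uLodd p r)) (vRodd q r)
      (uLodd p r) ∧
    AdmissibleN (uLodd p r) (pre la (vRodd q r)) (pre lb (uLodd p r)) (vRodd q r)
      (pre lb (uLodd p r)) ∧
    lexLt (uLodd p r) (pre la (vRodd q r)) ∧
    lexLt (pre lb (uLodd p r)) (vRodd q r) := by
  obtain ⟨s, rfl⟩ : ∃ s, p = s + 1 := ⟨p - 1, by omega⟩
  obtain ⟨s', rfl⟩ : ∃ s', q = s' + 1 := ⟨q - 1, by omega⟩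
  have hu : uLodd (s + 1) r = kn la lb s ((r - 3) / 2) := per_eq_kn ..
  have hv : vRodd (s' + 1) r = kn lb la s' ((r - 3) / 2) := per_eq_kn ..
  have hs : 2 ≤ s := by omega
  have hs' : 2 ≤ s' := by omega
  have hex : s' = 2 → (r - 3) / 2 = 0 → 3 ≤ s := by
    intro h2 hm
    by_contra hlt
    obtain ⟨x, rfl⟩ := hrodd
    obtain rfl : x = 1 := by omega
    obtain rfl : s = 2 := by omega
    subst h2
    norm_num at hineq
  rw [hu, hv]
  have hU := admissible_uL hs hs' hex
  have hV := admissible_vL hs hs' hex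
  refine ⟨hU, hV, ?_, ?_⟩
  · have h := ((hU 0 (Or.inl rfl)).1 ?_).2
    · rwa [shiftN_zero] at h
    · rw [kn_zero _ _ (by omega), if_neg (by omega)]
  · have h := ((hV 0 (Or.inl rfl)).2 rfl).2
    rwa [shiftN_zero] at h
end

section
/- Let p, q, r be integers with p, q, r ≥ 3, r odd, and 1/p + 1/q + 1/r < 1. Then the bi-infinite periodic extensions of the finite words x_L = (a^{p-1}b)^{(r-3)/2} a^{p-2}b and x_R = (b^{q-1}a)^{(r-3)/2} b^{q-2}a are admissible bi-infinite words. -/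
/-- The bi-infinite periodic extension of a nonempty finite word `x`:
`w(k) = x(k mod L)` where `L` is the length of `x`. -/
def perZ (x : List Letter) : ℤ → Letter :=
  fun k => x.getD (k % (x.length : ℤ)).toNat la

/-- `k` is a block start of the bi-infinite word `w`. -/
def blockStartZ (w : ℤ → Letter) (k : ℤ) : Prop := w (k - 1) ≠ w k

/-- The shift of the bi-infinite word `w` at `k`: the semi-infinite word
`n ↦ w (k + n)`. -/
def shiftZ (w : ℤ → Letter) (k : ℤ) : ℕ → Letter := fun n => w (k + n)

/-- A bi-infinite word `w` is admissible with respect to the kneading sequences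
`uL, uR, vL, vR` if at every block start `k`, the shift of `w` at `k` lies in
`[uL, uR)` if it starts with `a`, and in `[vL, vR)` if it starts with `b`. -/
def AdmissibleZ (uL uR vL vR : ℕ → Letter) (w : ℤ → Letter) : Prop :=
  ∀ k, blockStartZ w k →
    (w k = la → lexLe uL (shiftZ w k) ∧ lexLt (shiftZ w k) uR) ∧
    (w k = lb → lexLe vL (shiftZ w k) ∧ lexLt (shiftZ w k) vR)

/-- The finite word `x_L = (a^{p-1}b)^{(r-3)/2} a^{p-2}b` for `r` odd. -/
def xLodd (p r : ℕ) : List Letter :=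
  pw (List.replicate (p - 1) la ++ [lb]) ((r - 3) / 2) ++
    (List.replicate (p - 2) la ++ [lb])

/-- The finite word `x_R = (b^{q-1}a)^{(r-3)/2} b^{q-2}a` for `r` odd. -/
def xRodd (q r : ℕ) : List Letter :=
  pw (List.replicate (q - 1) lb ++ [la]) ((r - 3) / 2) ++
    (List.replicate (q - 2) lb ++ [la])

/-- Strict lexicographic order for the ordering of the alphabet in which the letter `c` comes
first. It is `lexLt` for `c = a` and the reverse of `lexLt` for `c = b`. -/
def lexFirst (c : Letter) (w w' : ℕ → Letter) : Prop :=
  ∃ n, (∀ m < n, w m = w' m) ∧ w n = c ∧ w' n = !c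

theorem lexLt_of_lexFirst_la {w w' : ℕ → Letter} (h : lexFirst la w w') : lexLt w w' := h

theorem lexLt_of_lexFirst_lb {w w' : ℕ → Letter} (h : lexFirst lb w w') : lexLt w' w := by
  obtain ⟨n, h1, h2, h3⟩ := h
  exact ⟨n, fun m hm => (h1 m hm).symm, h3, h2⟩

/-- The finite word `(c^{P+1} d)^m c^P d` with `d = !c`. -/
def excWord (c : Letter) (P m : ℕ) : List Letter :=
  pw (List.replicate (P + 1) c ++ [!c]) m ++ (List.replicate P c ++ [!c])

/-- The period `(c^{P+1} d)^m c^{P+1} d d` of the kneading sequence, with `d = !c`. -/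
def kneadWord (c : Letter) (P m : ℕ) : List Letter :=
  pw (List.replicate (P + 1) c ++ [!c]) m ++ (List.replicate (P + 1) c ++ [!c, !c])

theorem length_pw (x : List Letter) (m : ℕ) : (pw x m).length = m * x.length := by
  induction m with
  | zero => simp [pw]
  | succ m ih => simp [pw, ih]; ring

theorem pw_getD (x t : List Letter) (e : Letter) (m i : ℕ) :
    (pw x m ++ t).getD i e =
      if i < m * x.length then x.getD (i % x.length) e else t.getD (i - m * x.length) e := by
  induction m generalizing i with
  | zero => simp [pw]
  | succ m ih =>
    have hm : (m + 1) * x.length = m * x.length + x.length := by ring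
    rw [pw, List.append_assoc, hm]
    by_cases hi : i < x.length
    · rw [List.getD_append _ _ _ _ hi, if_pos (by omega), Nat.mod_eq_of_lt hi]
    · rw [List.getD_append_right _ _ _ _ (by omega), ih,
        Nat.mod_eq_sub_mod (not_lt.mp hi)]
      have : i - x.length < m * x.length ↔ i < m * x.length + x.length := by omega
      simp only [this, show i - x.length - m * x.length = i - (m * x.length + x.length) by omega]

theorem replicate_append_getD (c e : Letter) (n i : ℕ) (t : List Letter) :
    (List.replicate n c ++ t).getD i e = if i < n then c else t.getD (i - n) e := by
  split_ifs with h
  · rw [List.getD_append _ _ _ _ (by simpa using h)]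
    simp [List.getD_eq_getElem?_getD, h]
  · rw [List.getD_append_right _ _ _ _ (by simpa using h)]
    simp

/-- Adding a multiple of `N` does not change a residue; stated for use with a variable `N`. -/
theorem add_mod_of_mod_eq_zero {N a : ℕ} (ha : a % N = 0) (b : ℕ) : (a + b) % N = b % N := by
  simp [Nat.add_mod, ha]

theorem length_excWord (c : Letter) (P m : ℕ) :
    (excWord c P m).length = m * (P + 2) + P + 1 := by
  simp [excWord, length_pw]; ring

/-- The letters `d` of `(c^{P+1} d)^m c^P d` sit at the indices `≡ -1` modulo `P + 2` and at the
last index. -/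
theorem excWord_getD (c e : Letter) (P m i : ℕ) (hi : i < m * (P + 2) + P + 1) :
    (excWord c P m).getD i e =
      if (i + 1) % (P + 2) = 0 ∨ i = m * (P + 2) + P then !c else c := by
  have hlen : (List.replicate (P + 1) c ++ [!c]).length = P + 2 := by simp
  rw [excWord, pw_getD, hlen]
  have hM : m * (P + 2) % (P + 2) = 0 := by simp
  by_cases h : i < m * (P + 2)
  · rw [if_pos h, replicate_append_getD]
    have hlt := Nat.mod_lt i (show 0 < P + 2 by omega)
    have hne : i ≠ m * (P + 2) + P := by omega
    by_cases h' : i % (P + 2) < P + 1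
    · have : (i + 1) % (P + 2) = i % (P + 2) + 1 := by
        rw [Nat.add_mod, Nat.mod_eq_of_lt (show 1 < P + 2 by omega), Nat.mod_eq_of_lt (by omega)]
      simp [h', this, hne]
    · have h'' : i % (P + 2) = P + 1 := by omega
      have : (i + 1) % (P + 2) = 0 := by
        rw [Nat.add_mod, h'', Nat.mod_eq_of_lt (show 1 < P + 2 by omega)]
        simp
      simp [h'', this]
  · obtain ⟨s, rfl⟩ := Nat.exists_eq_add_of_le (not_lt.mp h)
    rw [if_neg h, replicate_append_getD, add_assoc, add_mod_of_mod_eq_zero hM,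
      Nat.mod_eq_of_lt (by omega)]
    by_cases hs : s < P
    · simp [hs, hs.ne]
    · have : s = P := by omega
      simp [this]

/-- On its first `m (P + 2) + P + 1` letters the kneading sequence is the periodic word
`(c^{P+1} d)^∞`. -/
theorem per_kneadWord (c : Letter) (P m i : ℕ) (hi : i < m * (P + 2) + P + 1) :
    per (kneadWord c P m) i = if (i + 1) % (P + 2) = 0 then !c else c := by
  have hlen : (List.replicate (P + 1) c ++ [!c]).length = P + 2 := by simp
  have hK : (kneadWord c P m).length = m * (P + 2) + P + 3 := by
    simp [kneadWord, length_pw]; ring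
  rw [per, hK, Nat.mod_eq_of_lt (by omega)]
  by_cases h : i < m * (P + 2)
  -- On the common prefix `(c^{P+1} d)^m` the letter is the one of `excWord`.
  · have := excWord_getD c la P m i hi
    rw [excWord, pw_getD, hlen, if_pos h] at this
    rw [kneadWord, pw_getD, hlen, if_pos h, this]
    simp [show i ≠ m * (P + 2) + P by omega]
  · obtain ⟨s, rfl⟩ := Nat.exists_eq_add_of_le (not_lt.mp h)
    rw [kneadWord, pw_getD, hlen, if_neg h, replicate_append_getD, add_assoc,
      add_mod_of_mod_eq_zero (by simp), Nat.mod_eq_of_lt (by omega)]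
    simp [show s < P + 1 by omega]

/-- Reading a bi-infinite periodic word inside one period. -/
theorem perZ_add (x : List Letter) (k : ℤ) (i n : ℕ) (hk : k % (x.length : ℤ) = i)
    (h : i + n < x.length) : perZ x (k + n) = x.getD (i + n) la := by
  rw [perZ, Int.add_emod, hk, ← Int.add_emod_right]
  have : ((i : ℤ) + (n : ℤ) % x.length + x.length) % x.length = ((i + n : ℕ) : ℤ) := by
    rw [Int.add_emod_right, Int.add_emod_emod]
    exact_mod_cast Nat.mod_eq_of_lt h
  rw [this, Int.toNat_natCast]

theorem exists_residue (L : ℕ) (hL : 0 < L) (k : ℤ) : ∃ i : ℕ, i < L ∧ k % (L : ℤ) = i := by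
  have h1 := Int.emod_nonneg k (show (L : ℤ) ≠ 0 by omega)
  have h2 := Int.emod_lt_of_pos k (show (0 : ℤ) < L by omega)
  exact ⟨(k % L).toNat, by omega, by omega⟩

/-- The residue of the successor, the wrap-around at the end of a period being a separate case. -/
theorem succ_residue (L : ℕ) (k : ℤ) (i : ℕ) (hi : i < L) (hk : k % (L : ℤ) = i) :
    (i + 1 = L ∧ (k + 1) % (L : ℤ) = (0 : ℕ)) ∨
      (i + 1 < L ∧ (k + 1) % (L : ℤ) = (i + 1 : ℕ)) := by
  rw [← Int.emod_add_emod, hk]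
  by_cases h : i + 1 = L
  · left
    refine ⟨h, ?_⟩
    have : (i : ℤ) + 1 = L := by exact_mod_cast h
    simp [this]
  · right
    refine ⟨by omega, ?_⟩
    exact_mod_cast Nat.mod_eq_of_lt (show i + 1 < L by omega)

theorem perZ_excWord (c : Letter) (P m : ℕ) (k : ℤ) (i : ℕ) (hi : i < m * (P + 2) + P + 1)
    (hk : k % ((m * (P + 2) + P + 1 : ℕ) : ℤ) = i) :
    perZ (excWord c P m) k =
      if (i + 1) % (P + 2) = 0 ∨ i = m * (P + 2) + P then !c else c := by
  rw [← excWord_getD c la P m i hi]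
  have := perZ_add (excWord c P m) k i 0 (by rw [length_excWord]; exact hk)
    (by rw [length_excWord]; exact hi)
  simpa using this

/-- The periodic word has no factor `d d`. -/
theorem perZ_succ (c : Letter) (P m : ℕ) (hP : 1 ≤ P) (k : ℤ)
    (hk : perZ (excWord c P m) k = !c) : perZ (excWord c P m) (k + 1) = c := by
  obtain ⟨i, hi, hki⟩ := exists_residue (m * (P + 2) + P + 1) (by omega) k
  have hM : m * (P + 2) % (P + 2) = 0 := by simp
  rw [perZ_excWord c P m k i hi hki] at hk
  rcases succ_residue _ k i hi hki with ⟨_, h⟩ | ⟨hlt, h⟩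
  · rw [perZ_excWord c P m _ 0 (by omega) h, if_neg]
    rw [Nat.mod_eq_of_lt (by omega)]
    omega
  · rw [perZ_excWord c P m _ (i + 1) hlt h, if_neg]
    have h0 : (i + 1) % (P + 2) = 0 := by
      by_contra h0
      rw [if_neg (by omega)] at hk
      simp at hk
    rw [add_mod_of_mod_eq_zero h0, Nat.mod_eq_of_lt (by omega)]
    rintro (h1 | h1)
    · omega
    · rw [h1, add_mod_of_mod_eq_zero hM, Nat.mod_eq_of_lt (by omega)] at h0
      omega

/-- The word shifted to the letter after a `d` (the start of a block of `c`'s when `P ≥ 1`) lies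
strictly on the `d`-side of the kneading sequence: the first difference is at the last letter of
the period. -/
theorem kneading_before_shift (c : Letter) (P m : ℕ) (k : ℤ)
    (hk : perZ (excWord c P m) k = !c) :
    lexFirst c (per (kneadWord c P m)) (shiftZ (perZ (excWord c P m)) (k + 1)) := by
  obtain ⟨i, hi, hki⟩ := exists_residue (m * (P + 2) + P + 1) (by omega) k
  have hM : m * (P + 2) % (P + 2) = 0 := by simp
  rw [perZ_excWord c P m k i hi hki] at hk
  -- The shifted word starts at an index `j` of the period that is a multiple of `P + 2`.
  obtain ⟨j, hj, hkj, hj0⟩ : ∃ j : ℕ, j < m * (P + 2) + P + 1 ∧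
      (k + 1) % ((m * (P + 2) + P + 1 : ℕ) : ℤ) = j ∧ j % (P + 2) = 0 := by
    rcases succ_residue _ k i hi hki with ⟨_, h⟩ | ⟨hlt, h⟩
    · exact ⟨0, by omega, h, by simp⟩
    · refine ⟨i + 1, hlt, h, ?_⟩
      by_contra h0
      rw [if_neg (by omega)] at hk
      simp at hk
  have hval : ∀ n, j + n < m * (P + 2) + P + 1 →
      shiftZ (perZ (excWord c P m)) (k + 1) n =
        if (n + 1) % (P + 2) = 0 ∨ j + n = m * (P + 2) + P then !c else c := by
    intro n hn
    rw [shiftZ, perZ_add (excWord c P m) _ j n (by rw [length_excWord]; exact hkj)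
      (by rw [length_excWord]; exact hn), excWord_getD c la P m _ hn, add_assoc,
      add_mod_of_mod_eq_zero hj0]
  refine ⟨m * (P + 2) + P - j, fun n hn => ?_, ?_, ?_⟩
  · rw [hval n (by omega), per_kneadWord c P m n (by omega)]
    simp [show j + n ≠ m * (P + 2) + P by omega]
  · rw [per_kneadWord c P m _ (by omega), if_neg]
    -- The index of the difference is `≡ P` modulo `P + 2`, since `j` is `≡ 0`.
    have h1 := add_mod_of_mod_eq_zero hj0 (m * (P + 2) + P - j + 1)
    rw [show j + (m * (P + 2) + P - j + 1) = m * (P + 2) + (P + 1) by omega,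
      add_mod_of_mod_eq_zero hM, Nat.mod_eq_of_lt (by omega)] at h1
    omega
  · rw [hval _ (by omega), if_pos (by omega)]

theorem lexFirst_pre {c e : Letter} {w w' : ℕ → Letter} (h : lexFirst c w w') (h' : ℕ → Letter)
    (h0 : h' 0 = e) (hs : ∀ n, h' (n + 1) = w' n) : lexFirst c (pre e w) h' := by
  obtain ⟨n, h1, h2, h3⟩ := h
  refine ⟨n + 1, fun i hi => ?_, h2, by rw [hs, h3]⟩
  cases i with
  | zero => exact h0.symm
  | succ i => rw [hs]; exact h1 i (by omega)

/-- All four bounds of admissibility at a block start, for the order in which `c` comes first; all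
are strict. Of the other kneading sequence `v` only the prefix `d d` matters. -/
theorem shift_bounds (c : Letter) (P m : ℕ) (hP : 1 ≤ P) (v : ℕ → Letter)
    (hv0 : v 0 = !c) (hv1 : v 1 = !c) (k : ℤ) (hk : blockStartZ (perZ (excWord c P m)) k) :
    (perZ (excWord c P m) k = c →
      lexFirst c (per (kneadWord c P m)) (shiftZ (perZ (excWord c P m)) k) ∧
      lexFirst c (shiftZ (perZ (excWord c P m)) k) (pre c v)) ∧
    (perZ (excWord c P m) k = (!c) →
      lexFirst c (pre (!c) (per (kneadWord c P m))) (shiftZ (perZ (excWord c P m)) k) ∧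
      lexFirst c (shiftZ (perZ (excWord c P m)) k) v) := by
  have hsucc := perZ_succ c P m hP
  have hfirst := kneading_before_shift c P m
  generalize perZ (excWord c P m) = w at *
  have hs0 : shiftZ w k 0 = w k := by simp [shiftZ]
  have hs1 : shiftZ w k 1 = w (k + 1) := by simp [shiftZ]
  have hs2 : shiftZ w k 2 = w (k + 1 + 1) := by simp [shiftZ, add_assoc]
  constructor
  · intro hc
    constructor
    · have := hfirst (k - 1) (Bool.eq_not.mpr (hc ▸ hk))
      rwa [sub_add_cancel] at this
    -- The shifted word starts with `c c` or with `c d c`, whereas `c · v = c d d ⋯`.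
    · by_cases h1 : w (k + 1) = c
      · refine ⟨1, fun i hi => ?_, by rw [hs1, h1], hv0⟩
        obtain rfl : i = 0 := by omega
        rw [hs0, hc]; rfl
      · have h1' : w (k + 1) = !c := Bool.eq_not.mpr h1
        refine ⟨2, fun i hi => ?_, by rw [hs2, hsucc _ h1'], hv1⟩
        obtain rfl | rfl : i = 0 ∨ i = 1 := by omega
        · rw [hs0, hc]; rfl
        · rw [hs1, h1']; exact hv0.symm
  · intro hc
    constructor
    · exact lexFirst_pre (hfirst k hc) _ (by rw [hs0, hc])
        fun n => by simp only [shiftZ]; congr 1; push_cast; ring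
    · refine ⟨1, fun i hi => ?_, by rw [hs1, hsucc k hc], hv1⟩
      obtain rfl : i = 0 := by omega
      rw [hs0, hc, hv0]

theorem per_kneadWord_zero (c : Letter) (P m : ℕ) : per (kneadWord c P m) 0 = c := by
  rw [per_kneadWord c P m 0 (by omega), if_neg]
  rw [Nat.mod_eq_of_lt (by omega)]; omega

theorem per_kneadWord_one (c : Letter) (P m : ℕ) (hP : 1 ≤ P) : per (kneadWord c P m) 1 = c := by
  rw [per_kneadWord c P m 1 (by omega), if_neg]
  rw [Nat.mod_eq_of_lt (by omega)]; omega

/-- For `p, q, r ≥ 3`, `r` odd, `1/p + 1/q + 1/r < 1`, the bi-infinite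
periodic extensions of `x_L = (a^{p-1}b)^{(r-3)/2} a^{p-2}b` and
`x_R = (b^{q-1}a)^{(r-3)/2} b^{q-2}a` are admissible bi-infinite words (with respect to
the kneading sequences `u_L`, `u_R = a·v_R`, `v_L = b·u_L`, `v_R` for `r` odd). -/
theorem exceptional_words_admissible_odd (p q r : ℕ)
    (hp : 3 ≤ p) (hq : 3 ≤ q) (hr : 3 ≤ r) (hrodd : Odd r)
    (hineq : (1 : ℝ) / p + 1 / q + 1 / r < 1) :
    AdmissibleZ (uLodd p r) (pre la (vRodd q r)) (pre lb (uLodd p r)) (vRodd q r)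
      (perZ (xLodd p r)) ∧
    AdmissibleZ (uLodd p r) (pre la (vRodd q r)) (pre lb (uLodd p r)) (vRodd q r)
      (perZ (xRodd q r)) := by
  obtain ⟨P, rfl⟩ := Nat.exists_eq_add_of_le' (show 2 ≤ p by omega)
  obtain ⟨Q, rfl⟩ := Nat.exists_eq_add_of_le' (show 2 ≤ q by omega)
  have hu : uLodd (P + 2) r = per (kneadWord la P ((r - 3) / 2)) := rfl
  have hv : vRodd (Q + 2) r = per (kneadWord lb Q ((r - 3) / 2)) := rfl
  have hx : xLodd (P + 2) r = excWord la P ((r - 3) / 2) := rfl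
  have hy : xRodd (Q + 2) r = excWord lb Q ((r - 3) / 2) := rfl
  rw [hu, hv, hx, hy]
  generalize (r - 3) / 2 = m
  constructor
  · intro k hk
    obtain ⟨h1, h2⟩ := shift_bounds la P m (by omega) (per (kneadWord lb Q m))
      (per_kneadWord_zero lb Q m) (per_kneadWord_one lb Q m (by omega)) k hk
    exact ⟨fun h => ⟨Or.inl (lexLt_of_lexFirst_la (h1 h).1), lexLt_of_lexFirst_la (h1 h).2⟩,
      fun h => ⟨Or.inl (lexLt_of_lexFirst_la (h2 h).1), lexLt_of_lexFirst_la (h2 h).2⟩⟩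
  · intro k hk
    obtain ⟨h1, h2⟩ := shift_bounds lb Q m (by omega) (per (kneadWord la P m))
      (per_kneadWord_zero la P m) (per_kneadWord_one la P m (by omega)) k hk
    exact ⟨fun h => ⟨Or.inl (lexLt_of_lexFirst_lb (h2 h).2), lexLt_of_lexFirst_lb (h2 h).1⟩,
      fun h => ⟨Or.inl (lexLt_of_lexFirst_lb (h1 h).2), lexLt_of_lexFirst_lb (h1 h).1⟩⟩
end

section
/- Let p, q, r be integers with p, q, r ≥ 3, r even, and 1/p + 1/q + 1/r < 1. Then the bi-infinite periodic extensions of the finite words x_L = (a^{p-1}b)^{(r-2)/2} a^{p-2}b (a^{p-1}b)^{(r-4)/2} a^{p-2}b and x_R = (b^{q-1}a)^{(r-2)/2} b^{q-2}a (b^{q-1}a)^{(r-4)/2} b^{q-2}a are admissible bi-infinite words. -/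
/-- The finite word `x_L = (a^{p-1}b)^{(r-2)/2} a^{p-2}b (a^{p-1}b)^{(r-4)/2} a^{p-2}b`
for `r` even. -/
def xLeven (p r : ℕ) : List Letter :=
  pw (List.replicate (p - 1) la ++ [lb]) ((r - 2) / 2) ++
    (List.replicate (p - 2) la ++ [lb]) ++
    pw (List.replicate (p - 1) la ++ [lb]) ((r - 4) / 2) ++
    (List.replicate (p - 2) la ++ [lb])

/-- The finite word `x_R = (b^{q-1}a)^{(r-2)/2} b^{q-2}a (b^{q-1}a)^{(r-4)/2} b^{q-2}a`
for `r` even. -/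
def xReven (q r : ℕ) : List Letter :=
  pw (List.replicate (q - 1) lb ++ [la]) ((r - 2) / 2) ++
    (List.replicate (q - 2) lb ++ [la]) ++
    pw (List.replicate (q - 1) lb ++ [la]) ((r - 4) / 2) ++
    (List.replicate (q - 2) lb ++ [la])

/-! ### Words as sequences of blocks -/

/-- The finite word `a^{n₁} b a^{n₂} b ⋯` with exponent list `n₁, n₂, …`. -/
def code : List ℕ → List Letter
  | [] => []
  | n :: t => List.replicate n la ++ lb :: code t

theorem code_append (s t : List ℕ) : code (s ++ t) = code s ++ code t := by
  induction s with
  | nil => rfl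
  | cons n s ih => simp [code, ih]

theorem code_replicate (n k : ℕ) :
    code (List.replicate k n) = pw (List.replicate n la ++ [lb]) k := by
  induction k with
  | zero => rfl
  | succ k ih => simp [List.replicate_succ, code, pw, ih]

/-- A position of `code ℓ` that is initial or preceded by `b` is a boundary between blocks. -/
theorem exists_split_code (ℓ : List ℕ) : ∀ i, i ≤ (code ℓ).length →
    (i = 0 ∨ (code ℓ).getD (i - 1) la = lb) →
    ∃ ℓ₁ ℓ₂, ℓ = ℓ₁ ++ ℓ₂ ∧ i = (code ℓ₁).length := by
  induction ℓ with
  | nil =>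
    intro i hi _
    exact ⟨[], [], rfl, by simpa [code] using hi⟩
  | cons n t ih =>
    intro i hi h
    rcases Nat.eq_zero_or_pos i with h0 | h0
    · exact ⟨[], n :: t, rfl, by simp [h0, code]⟩
    · have h1 : (code (n :: t)).getD (i - 1) la = lb := h.resolve_left h0.ne'
      have hin : n + 1 ≤ i := by
        by_contra hlt
        have h2 : i - 1 < n := by omega
        rw [code, List.getD_append _ _ _ _ (by simpa using h2)] at h1
        simp [List.getD, h2, la, lb] at h1
      obtain ⟨i, rfl⟩ := Nat.exists_eq_add_of_le hin
      obtain ⟨ℓ₁, ℓ₂, h2, h3⟩ := ih i (by simp [code] at hi; omega) (by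
        rcases Nat.eq_zero_or_pos i with h4 | h4
        · exact Or.inl h4
        · right
          rw [code, List.getD_append_right _ _ _ _ (by rw [List.length_replicate]; omega)] at h1
          have : n + 1 + i - 1 - (List.replicate n la).length = (i - 1) + 1 := by
            rw [List.length_replicate]; omega
          rw [this, List.getD_cons_succ] at h1
          exact h1)
      exact ⟨n :: ℓ₁, ℓ₂, by simp [h2], by simp [code, h3]; omega⟩

/-- Over one period, the periodic word generated by `l₁ l₂`, read from the start of `l₂`, is
`l₂ l₁`. -/
theorem perZ_rotate (l₁ l₂ : List Letter) (k : ℤ) (h2 : l₂ ≠ [])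
    (hk : k % ((l₁ ++ l₂).length : ℤ) = l₁.length) (n : ℕ) (hn : n < (l₂ ++ l₁).length) :
    perZ (l₁ ++ l₂) (k + n) = (l₂ ++ l₁).getD n la := by
  have hpos : 0 < l₂.length := List.length_pos_iff.2 h2
  simp only [List.length_append] at hn hk
  simp only [perZ, List.length_append]
  rw [Int.add_emod, hk, Int.add_emod_emod]
  by_cases hlt : n < l₂.length
  · rw [Int.emod_eq_of_lt (by positivity) (by push_cast; omega),
      List.getD_append_right _ _ _ _ (by omega), List.getD_append _ _ _ _ hlt]
    congr 1
    omega
  · have h3 : ((l₁.length : ℤ) + n) % ((l₁.length + l₂.length : ℕ) : ℤ)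
        = (n : ℤ) - l₂.length := by
      rw [← Int.sub_emod_right, Int.emod_eq_of_lt (by push_cast; omega) (by push_cast; omega)]
      push_cast
      ring
    rw [h3, List.getD_append _ _ _ _ (by omega), List.getD_append_right _ _ _ _ (by omega)]
    congr 1
    omega

/-- If `u` and `s` share their exponents up to a block that is longer in `u` than in `s` by one,
then `u` precedes `s`. -/
theorem lexLt_of_code {u s : ℕ → Letter} {y y' : List Letter} (c d d' : List ℕ) (Q : ℕ)
    (hu : ∀ n < y.length, u n = y.getD n la) (hs : ∀ n < y'.length, s n = y'.getD n la)
    (hy : y = code (c ++ (Q + 1) :: d)) (hy' : y' = code (c ++ Q :: d')) : lexLt u s := by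
  have e1 : y = (code c ++ List.replicate Q la) ++ la :: lb :: code d := by
    simp [hy, code_append, code, List.replicate_succ']
  have e2 : y' = (code c ++ List.replicate Q la) ++ lb :: code d' := by
    simp [hy', code_append, code]
  generalize code c ++ List.replicate Q la = z at e1 e2
  subst e1 e2
  refine ⟨z.length, fun m hm => ?_, ?_, ?_⟩
  · rw [hu m (by simp; omega), hs m (by simp; omega), List.getD_append _ _ _ _ hm,
      List.getD_append _ _ _ _ hm]
  · rw [hu _ (by simp)]
    simp [List.getD]
  · rw [hs _ (by simp)]
    simp [List.getD]

/-! ### Comparison of `x_L` with `u_L` -/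

/-- The exponents of `x_L`, with `Q = p - 2` and `r = 2 m + 4`. -/
def expo (Q m : ℕ) : List ℕ :=
  List.replicate (m + 1) (Q + 1) ++ Q :: (List.replicate m (Q + 1) ++ [Q])

/-- Every rotation of the exponents of `x_L` first differs from the initial exponents of `u_L` at a
block that is short in the rotation and long in `u_L`. -/
theorem rotation_expo (Q m : ℕ) (ℓ₁ ℓ₂ : List ℕ) (h : expo Q m = ℓ₁ ++ ℓ₂) (h2 : ℓ₂ ≠ []) :
    ∃ c d d', List.replicate (m + 1) (Q + 1) ++ Q :: List.replicate (m + 1) (Q + 1)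
        = c ++ (Q + 1) :: d ∧ ℓ₂ ++ ℓ₁ = c ++ Q :: d' := by
  have key : ∀ j ≤ m, ∀ t, ℓ₂ = List.replicate j (Q + 1) ++ Q :: t →
      ∃ c d d', List.replicate (m + 1) (Q + 1) ++ Q :: List.replicate (m + 1) (Q + 1)
        = c ++ (Q + 1) :: d ∧ ℓ₂ ++ ℓ₁ = c ++ Q :: d' := by
    intro j hj t ht
    obtain ⟨i, rfl⟩ := Nat.exists_eq_add_of_le hj
    refine ⟨List.replicate j (Q + 1),
      List.replicate i (Q + 1) ++ Q :: List.replicate (j + i + 1) (Q + 1), t ++ ℓ₁, ?_, ?_⟩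
    · rw [show j + i + 1 = j + (i + 1) by ring, List.replicate_add]
      simp [List.replicate_succ]
    · simp [ht]
  rw [expo] at h
  rcases List.append_eq_append_iff.1 h with ⟨c, h3, h4⟩ | ⟨c, h3, h4⟩
  · cases c with
    | nil => exact key 0 (by omega) (List.replicate m (Q + 1) ++ [Q]) (by simpa using h4.symm)
    | cons x c =>
      rw [List.cons_append, List.cons.injEq] at h4
      rcases List.append_eq_append_iff.1 h4.2 with ⟨e, h5, h6⟩ | ⟨e, h5, h6⟩
      · cases e with
        | nil => exact key 0 (by omega) [] (by simpa using h6.symm)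
        | cons y e =>
          simp only [List.cons_append, List.cons.injEq, List.nil_eq, List.append_eq_nil_iff] at h6
          exact absurd h6.2.2 h2
      · have h7 := (List.append_eq_replicate_iff.1 h5.symm)
        exact key e.length (by omega) [] (by rw [h6, ← h7.2.2])
  · have h7 := (List.append_eq_replicate_iff.1 h3.symm)
    rcases Nat.eq_zero_or_pos ℓ₁.length with h0 | h0
    · have h8 : ℓ₁ = [] := List.length_eq_zero_iff.1 h0
      subst h8
      -- The trivial rotation agrees with `u_L` up to the last exponent of `x_L`.
      refine ⟨List.replicate (m + 1) (Q + 1) ++ Q :: List.replicate m (Q + 1), [], [], ?_, ?_⟩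
      · rw [List.replicate_succ' (n := m)]
        simp
      · simp only [List.nil_append] at h
        simp [← h]
    · exact key c.length (by omega) (List.replicate m (Q + 1) ++ [Q]) (by
        rw [h4, ← h7.2.2])

theorem xLeven_eq (Q m : ℕ) : xLeven (Q + 2) (2 * m + 4) = code (expo Q m) := by
  have h1 : (2 * m + 4 - 2) / 2 = m + 1 := by omega
  have h2 : (2 * m + 4 - 4) / 2 = m := by omega
  rw [xLeven, h1, h2, expo]
  simp [code_append, code_replicate, code]

/-- The finite word generating `u_L`. -/
def uWord (p r : ℕ) : List Letter :=
  pw (List.replicate (p - 1) la ++ [lb]) ((r - 2) / 2) ++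
    List.replicate (p - 2) la ++
    pw (lb :: List.replicate (p - 1) la) ((r - 2) / 2) ++ [lb, lb]

theorem pw_comm (x : List Letter) (n : ℕ) (t : List Letter) :
    pw (lb :: x) n ++ lb :: t = lb :: (pw (x ++ [lb]) n ++ t) := by
  induction n with
  | zero => rfl
  | succ n ih => simp [pw, ih]

theorem uWord_eq (Q m : ℕ) : uWord (Q + 2) (2 * m + 4) =
    code (List.replicate (m + 1) (Q + 1) ++ Q :: List.replicate (m + 1) (Q + 1)) ++ [lb] := by
  have h1 : (2 * m + 4 - 2) / 2 = m + 1 := by omega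
  rw [uWord, h1]
  simp [code_append, code_replicate, code, pw_comm]

theorem uLeven_prefix (Q m n : ℕ)
    (hn : n < (code (List.replicate (m + 1) (Q + 1) ++
      Q :: List.replicate (m + 1) (Q + 1))).length) :
    uLeven (Q + 2) (2 * m + 4) n =
      (code (List.replicate (m + 1) (Q + 1) ++ Q :: List.replicate (m + 1) (Q + 1))).getD n la := by
  change per (uWord (Q + 2) (2 * m + 4)) n = _
  rw [uWord_eq, per, Nat.mod_eq_of_lt (by rw [List.length_append]; omega),
    List.getD_append _ _ _ _ hn]

/-- In `x_L^∞`, the shift at a position preceded by `b` begins with `a` and exceeds `u_L`. -/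
theorem core (Q m : ℕ) (hQ : 1 ≤ Q) (k : ℤ)
    (hk : perZ (xLeven (Q + 2) (2 * m + 4)) (k - 1) = lb) :
    perZ (xLeven (Q + 2) (2 * m + 4)) k = la ∧
    lexLt (uLeven (Q + 2) (2 * m + 4)) (shiftZ (perZ (xLeven (Q + 2) (2 * m + 4))) k) := by
  rw [xLeven_eq] at hk ⊢
  have hL : 0 < (code (expo Q m)).length := by simp [expo, code_append, code]
  have hL' : (0 : ℤ) < (code (expo Q m)).length := by exact_mod_cast hL
  have hm0 := Int.emod_nonneg k hL'.ne'
  have hm1 := Int.emod_lt_of_pos k hL'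
  obtain ⟨i, hi⟩ := Int.eq_ofNat_of_zero_le hm0
  obtain ⟨ℓ₁, ℓ₂, h1, h2⟩ := exists_split_code (expo Q m) i (by omega) (by
    rcases Nat.eq_zero_or_pos i with h0 | h0
    · exact Or.inl h0
    · right
      have h3 : (k - 1) % ((code (expo Q m)).length : ℤ) = ((i - 1 : ℕ) : ℤ) := by
        rw [← Int.emod_sub_emod, hi, Int.emod_eq_of_lt (by omega) (by omega)]
        omega
      rw [perZ, h3] at hk
      exact hk)
  have hne : ℓ₂ ≠ [] := by
    rintro rfl
    rw [List.append_nil] at h1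
    rw [h1, ← h2] at hm1 hi
    omega
  have hcne : code ℓ₂ ≠ [] := by
    cases ℓ₂ with
    | nil => exact absurd rfl hne
    | cons n t => simp [code]
  obtain ⟨c, d, d', h4, h5⟩ := rotation_expo Q m ℓ₁ ℓ₂ h1 hne
  have hs : ∀ n < (code (ℓ₂ ++ ℓ₁)).length,
      perZ (code (expo Q m)) (k + n) = (code (ℓ₂ ++ ℓ₁)).getD n la := by
    intro n hn
    rw [code_append] at hn ⊢
    rw [h1, code_append]
    refine perZ_rotate _ _ k hcne ?_ n hn
    rw [← code_append, ← h1, hi, h2]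
  refine ⟨?_, lexLt_of_code c d d' Q (uLeven_prefix Q m) hs (by rw [h4]) (by rw [h5])⟩
  have h0 := hs 0 (by rw [code_append]; simp [List.length_pos_iff.2 hcne])
  rw [Nat.cast_zero, add_zero] at h0
  rw [h0]
  -- The first exponent of `ℓ₂` is positive, being one of `Q`, `Q + 1`.
  cases ℓ₂ with
  | nil => exact absurd rfl hne
  | cons n t =>
    have hmem : n ∈ expo Q m := by rw [h1]; simp
    have hn : 0 < n := by
      simp only [expo, List.mem_append, List.mem_cons, List.mem_replicate] at hmem
      grind
    obtain ⟨n, rfl⟩ := Nat.exists_eq_succ_of_ne_zero hn.ne'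
    simp [code, List.replicate_succ]

/-! ### Strict admissibility of `x_L` -/

/-- Admissibility with all four inequalities strict. -/
def StrictAdm (uL uR vL vR : ℕ → Letter) (w : ℤ → Letter) : Prop :=
  ∀ k, blockStartZ w k →
    (w k = la → lexLt uL (shiftZ w k) ∧ lexLt (shiftZ w k) uR) ∧
    (w k = lb → lexLt vL (shiftZ w k) ∧ lexLt (shiftZ w k) vR)

theorem StrictAdm.admissible {uL uR vL vR : ℕ → Letter} {w : ℤ → Letter}
    (h : StrictAdm uL uR vL vR w) : AdmissibleZ uL uR vL vR w := fun k hk =>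
  ⟨fun ha => ⟨Or.inl ((h k hk).1 ha).1, ((h k hk).1 ha).2⟩,
    fun hb => ⟨Or.inl ((h k hk).2 hb).1, ((h k hk).2 hb).2⟩⟩

theorem strictAdm_xL (Q m : ℕ) (hQ : 1 ≤ Q) (v : ℕ → Letter) (hv0 : v 0 = lb) (hv1 : v 1 = lb) :
    StrictAdm (uLeven (Q + 2) (2 * m + 4)) (pre la v) (pre lb (uLeven (Q + 2) (2 * m + 4))) v
      (perZ (xLeven (Q + 2) (2 * m + 4))) := by
  have hc := core Q m hQ
  generalize perZ (xLeven (Q + 2) (2 * m + 4)) = w at hc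
  generalize uLeven (Q + 2) (2 * m + 4) = u at hc
  have hstep : ∀ k, w k = lb → w (k + 1) = la ∧ lexLt u (shiftZ w (k + 1)) := fun k hk =>
    hc (k + 1) (by rwa [add_sub_cancel_right])
  intro k hk
  refine ⟨fun ha => ⟨(hc k ?_).2, ?_⟩, fun hb => ⟨?_, ?_⟩⟩
  · rw [blockStartZ, ha] at hk
    simpa [la, lb] using hk
  · by_cases h1 : w (k + 1) = la
    · refine ⟨1, fun j hj => ?_, by simpa [shiftZ] using h1, hv0⟩
      obtain rfl : j = 0 := by omega
      simpa [shiftZ, pre] using ha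
    · have h1' : w (k + 1) = lb := by simpa [la, lb] using h1
      refine ⟨2, fun j hj => ?_, ?_, hv1⟩
      · obtain rfl | rfl : j = 0 ∨ j = 1 := by omega
        · simpa [shiftZ, pre] using ha
        · simpa [shiftZ, pre, hv0] using h1'
      · have := (hstep _ h1').1
        rw [add_assoc] at this
        simpa [shiftZ] using this
  · obtain ⟨n, h1, h2, h3⟩ := (hstep k hb).2
    have hs : ∀ j : ℕ, shiftZ w k (j + 1) = shiftZ w (k + 1) j := by
      intro j
      simp only [shiftZ]
      congr 1
      push_cast
      ring
    refine ⟨n + 1, fun j hj => ?_, h2, by rw [hs, h3]⟩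
    cases j with
    | zero => simpa [shiftZ, pre] using hb.symm
    | succ j => rw [hs, ← h1 j (by omega)]; rfl
  · refine ⟨1, fun j hj => ?_, by simpa [shiftZ] using (hstep k hb).1, hv1⟩
    obtain rfl : j = 0 := by omega
    simpa [shiftZ, hv0] using hb

/-! ### Exchange of the two letters -/

theorem lexLt_flip {w w' : ℕ → Letter} (h : lexLt w w') :
    lexLt (fun n => !w' n) (fun n => !w n) := by
  obtain ⟨n, h1, h2, h3⟩ := h
  exact ⟨n, fun m hm => by simp [h1 m hm], by simp [h3, la, lb], by simp [h2, la, lb]⟩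

theorem pre_flip (c : Letter) (w : ℕ → Letter) :
    (fun n => !pre c w n) = pre (!c) (fun n => !w n) := by
  funext n
  cases n <;> rfl

/-- Exchanging the letters exchanges the roles of the `u`-bounds and the `v`-bounds. -/
theorem StrictAdm.flip {uL uR vL vR : ℕ → Letter} {w : ℤ → Letter}
    (h : StrictAdm uL uR vL vR w) :
    StrictAdm (fun n => !vR n) (fun n => !vL n) (fun n => !uR n) (fun n => !uL n)
      (fun k => !w k) := by
  intro k hk
  have hk' : blockStartZ w k := by simpa [blockStartZ] using hk
  refine ⟨fun ha => ?_, fun hb => ?_⟩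
  · have h1 := (h k hk').2 (by simpa [la, lb] using ha)
    exact ⟨lexLt_flip h1.2, lexLt_flip h1.1⟩
  · have h1 := (h k hk').1 (by simpa [la, lb] using hb)
    exact ⟨lexLt_flip h1.2, lexLt_flip h1.1⟩

theorem getD_map_not (x : List Letter) (i : ℕ) (hi : i < x.length) :
    (x.map not).getD i la = !x.getD i la := by
  simp [List.getD, hi]

theorem per_map_not (x : List Letter) (hx : 0 < x.length) :
    per (x.map not) = fun n => !per x n := by
  funext n
  simp only [per, List.length_map]
  exact getD_map_not _ _ (Nat.mod_lt _ hx)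

theorem perZ_map_not (x : List Letter) (hx : 0 < x.length) :
    perZ (x.map not) = fun k => !perZ x k := by
  funext k
  simp only [perZ, List.length_map]
  refine getD_map_not _ _ ?_
  have h1 := Int.emod_nonneg k (b := (x.length : ℤ)) (by omega)
  have h2 := Int.emod_lt_of_pos k (b := (x.length : ℤ)) (by omega)
  omega

theorem pw_map_not (x : List Letter) (n : ℕ) : (pw x n).map not = pw (x.map not) n := by
  induction n with
  | zero => rfl
  | succ n ih => simp [pw, ih]

theorem vReven_eq (q r : ℕ) : vReven q r = fun n => !uLeven q r n := by
  have h : 0 < (uWord q r).length := by simp [uWord]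
  refine Eq.trans ?_ (per_map_not (uWord q r) h)
  simp [vReven, uWord, pw_map_not, la, lb]

theorem perZ_xReven (q r : ℕ) : perZ (xReven q r) = fun k => !perZ (xLeven q r) k := by
  have h : 0 < (xLeven q r).length := by simp [xLeven]
  rw [← perZ_map_not _ h]
  simp [xLeven, xReven, pw_map_not, la, lb]

theorem uLeven_start (Q m : ℕ) (hQ : 1 ≤ Q) :
    uLeven (Q + 2) (2 * m + 4) 0 = la ∧ uLeven (Q + 2) (2 * m + 4) 1 = la := by
  obtain ⟨Q, rfl⟩ := Nat.exists_eq_add_of_le' hQ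
  constructor <;> rw [uLeven_prefix] <;> simp [List.replicate_succ, code]

/-- For `p, q, r ≥ 3`, `r` even, `1/p + 1/q + 1/r < 1`, the bi-infinite
periodic extensions of `x_L = (a^{p-1}b)^{(r-2)/2} a^{p-2}b (a^{p-1}b)^{(r-4)/2} a^{p-2}b`
and `x_R = (b^{q-1}a)^{(r-2)/2} b^{q-2}a (b^{q-1}a)^{(r-4)/2} b^{q-2}a` are admissible
bi-infinite words (with respect to the kneading sequences `u_L`, `u_R = a·v_R`,
`v_L = b·u_L`, `v_R` for `r` even). -/
theorem exceptional_words_admissible_even (p q r : ℕ)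
    (hp : 3 ≤ p) (hq : 3 ≤ q) (hr : 3 ≤ r) (hreven : Even r)
    (hineq : (1 : ℝ) / p + 1 / q + 1 / r < 1) :
    AdmissibleZ (uLeven p r) (pre la (vReven q r)) (pre lb (uLeven p r)) (vReven q r)
      (perZ (xLeven p r)) ∧
    AdmissibleZ (uLeven p r) (pre la (vReven q r)) (pre lb (uLeven p r)) (vReven q r)
      (perZ (xReven q r)) := by
  obtain ⟨P, rfl⟩ := Nat.exists_eq_add_of_le' hp
  obtain ⟨Q, rfl⟩ := Nat.exists_eq_add_of_le' hq
  obtain ⟨m, rfl⟩ : ∃ m, r = 2 * m + 4 := by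
    obtain ⟨t, rfl⟩ := hreven
    exact ⟨t - 2, by omega⟩
  have hP := uLeven_start (P + 1) m (by omega)
  have hQ := uLeven_start (Q + 1) m (by omega)
  constructor
  · refine (strictAdm_xL (P + 1) m (by omega) _ ?_ ?_).admissible
    · rw [vReven_eq]
      exact congrArg not hQ.1
    · rw [vReven_eq]
      exact congrArg not hQ.2
  · have h := (strictAdm_xL (Q + 1) m (by omega) (fun n => !uLeven (P + 3) (2 * m + 4) n)
      (congrArg not hP.1) (congrArg not hP.2)).flip
    simp only [pre_flip, Bool.not_not] at h
    rw [perZ_xReven, vReven_eq]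
    exact h.admissible
end

section
/- Let p, q, r be integers with p, q, r ≥ 3 and 1/p + 1/q + 1/r < 1. Let w : ℤ → {a, b} be an admissible bi-infinite word having block starts at arbitrarily negative indices (for every k ∈ ℤ there exists j ≤ k with w(j-1) ≠ w(j)). Then w contains no factor a^p and no factor b^q; equivalently, every maximal block of consecutive a's in w has length at most p-1 and every maximal block of consecutive b's has length at most q-1. -/
/-- The kneading sequence `u_L`, according to the parity of `r`. -/
def uLknead (p r : ℕ) : ℕ → Letter := if Odd r then uLodd p r else uLeven p r

/-- The kneading sequence `v_R`, according to the parity of `r`. -/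
def vRknead (q r : ℕ) : ℕ → Letter := if Odd r then vRodd q r else vReven q r

/-- The bi-infinite word `w` contains the finite word `x` as a factor. -/
def containsZ (w : ℤ → Letter) (x : List Letter) : Prop :=
  ∃ k : ℤ, ∀ i : ℕ, i < x.length → w (k + i) = x.getD i la

/-- The semi-infinite word `u` begins with the finite word `c^n d`. -/
def BeginsWith (u : ℕ → Letter) (c : Letter) (n : ℕ) (d : Letter) : Prop :=
  (∀ i < n, u i = c) ∧ u n = d

lemma beginsWith_per (c d : Letter) (n : ℕ) (t : List Letter) :
    BeginsWith (per (List.replicate n c ++ d :: t)) c n d := by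
  have hlen : (List.replicate n c ++ d :: t).length = n + t.length + 1 := by
    simp; omega
  refine ⟨fun i hi => ?_, ?_⟩
  · unfold per
    rw [hlen, Nat.mod_eq_of_lt (by omega), List.getD_append _ _ _ _ (by simpa using hi)]
    simp [List.getD_eq_getElem?_getD, hi]
  · unfold per
    rw [hlen, Nat.mod_eq_of_lt (by omega), List.getD_append_right _ _ _ _ (by simp)]
    simp

/-- Handles both exponents `m = 0` and `m > 0` of the leading power in the odd kneading words. -/
lemma pw_append_eq (c d : Letter) (n m : ℕ) (s : List Letter) :
    ∃ t, pw (List.replicate n c ++ [d]) m ++ (List.replicate n c ++ d :: s) =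
      List.replicate n c ++ d :: t := by
  cases m with
  | zero => exact ⟨s, rfl⟩
  | succ m =>
    exact ⟨pw (List.replicate n c ++ [d]) m ++ (List.replicate n c ++ d :: s), by simp [pw]⟩

lemma pw_pos_append_eq (c d : Letter) (n : ℕ) {m : ℕ} (hm : 0 < m) (s : List Letter) :
    ∃ t, pw (List.replicate n c ++ [d]) m ++ s = List.replicate n c ++ d :: t := by
  obtain ⟨m, rfl⟩ := Nat.exists_eq_add_of_lt hm
  exact ⟨pw (List.replicate n c ++ [d]) (0 + m) ++ s, by simp [pw]⟩

/-- For even `r`, `r ≥ 3` forces `(r - 2) / 2 ≥ 1`, so the first block still has exponent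
`p - 1` and not `p - 2`. -/
lemma beginsWith_uLknead (p : ℕ) {r : ℕ} (hr : 3 ≤ r) :
    BeginsWith (uLknead p r) la (p - 1) lb := by
  unfold uLknead
  split_ifs with hodd
  · obtain ⟨t, ht⟩ := pw_append_eq la lb (p - 1) ((r - 3) / 2) [lb]
    unfold uLodd
    rw [ht]
    exact beginsWith_per _ _ _ _
  · have hm : 0 < (r - 2) / 2 := by
      rw [Nat.not_odd_iff_even, Nat.even_iff] at hodd
      omega
    unfold uLeven
    rw [List.append_assoc, List.append_assoc]
    obtain ⟨t, ht⟩ := pw_pos_append_eq la lb (p - 1) hm (List.replicate (p - 2) la ++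
      (pw (lb :: List.replicate (p - 1) la) ((r - 2) / 2) ++ [lb, lb]))
    rw [ht]
    exact beginsWith_per _ _ _ _

lemma beginsWith_vRknead (q : ℕ) {r : ℕ} (hr : 3 ≤ r) :
    BeginsWith (vRknead q r) lb (q - 1) la := by
  unfold vRknead
  split_ifs with hodd
  · obtain ⟨t, ht⟩ := pw_append_eq lb la (q - 1) ((r - 3) / 2) [la]
    unfold vRodd
    rw [ht]
    exact beginsWith_per _ _ _ _
  · have hm : 0 < (r - 2) / 2 := by
      rw [Nat.not_odd_iff_even, Nat.even_iff] at hodd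
      omega
    unfold vReven
    rw [List.append_assoc, List.append_assoc]
    obtain ⟨t, ht⟩ := pw_pos_append_eq lb la (q - 1) hm (List.replicate (q - 2) lb ++
      (pw (la :: List.replicate (q - 1) lb) ((r - 2) / 2) ++ [la, la]))
    rw [ht]
    exact beginsWith_per _ _ _ _

lemma not_lexLe_of_beginsWith {u s : ℕ → Letter} {n : ℕ} (hn : 0 < n)
    (hu : BeginsWith u la (n - 1) lb) (hs : ∀ i < n, s i = la) : ¬ lexLe u s := by
  have hne : u (n - 1) ≠ s (n - 1) := by
    rw [hu.2, hs _ (by omega)]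
    decide
  rintro (⟨m, heq, -, hsm⟩ | rfl)
  · rcases lt_or_ge m n with hm | hm
    · rw [hs m hm] at hsm
      exact absurd hsm (by decide)
    · exact hne (heq _ (by omega))
  · exact hne rfl

lemma not_lexLt_of_beginsWith {v s : ℕ → Letter} {n : ℕ} (hn : 0 < n)
    (hv : BeginsWith v lb (n - 1) la) (hs : ∀ i < n, s i = lb) : ¬ lexLt s v := by
  have hne : s (n - 1) ≠ v (n - 1) := by
    rw [hv.2, hs _ (by omega)]
    decide
  rintro ⟨m, heq, hsm, -⟩
  rcases lt_or_ge m n with hm | hm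
  · rw [hs m hm] at hsm
    exact absurd hsm (by decide)
  · exact hne (heq _ (by omega))

/-- An occurrence of `c^n` can be moved left to the start of its maximal block. -/
lemma exists_blockStart_of_containsZ {w : ℤ → Letter}
    (hneg : ∀ k : ℤ, ∃ j ≤ k, w (j - 1) ≠ w j) {c : Letter} {n : ℕ} (hn : 0 < n)
    (h : containsZ w (List.replicate n c)) :
    ∃ j : ℤ, blockStartZ w j ∧ ∀ i < n, shiftZ w j i = c := by
  obtain ⟨k, hk⟩ := h
  have hk' : ∀ i < n, w (k + (i : ℕ)) = c := fun i hi => by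
    rw [hk i (by simpa using hi)]
    simp [List.getD_eq_getElem?_getD, hi]
  -- The last block start at or before `k`.
  obtain ⟨j, ⟨hjk, hj⟩, hmax⟩ := Int.exists_greatest_of_bdd
    (P := fun j => j ≤ k ∧ w (j - 1) ≠ w j) ⟨k, fun _ hz => hz.1⟩ (hneg k)
  have hback : ∀ d : ℕ, j ≤ k - d → w (k - d) = c := by
    intro d
    induction d with
    | zero => intro _; simpa using hk' 0 hn
    | succ d ih =>
      intro hd
      push_cast at hd ⊢
      rw [← ih (by omega), ← sub_sub]
      by_contra hne
      have := hmax (k - d) ⟨by omega, hne⟩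
      omega
  refine ⟨j, hj, fun i hi => ?_⟩
  unfold shiftZ
  rcases le_total (j + i) k with hle | hle
  · have := hback (k - (j + i)).toNat (by omega)
    rwa [Int.toNat_of_nonneg (by omega), sub_sub_cancel] at this
  · have := hk' (j + i - k).toNat (by omega)
    rwa [Int.toNat_of_nonneg (by omega), add_sub_cancel] at this

/-- For `p, q, r ≥ 3` with `1/p + 1/q + 1/r < 1`, an admissible
bi-infinite word having block starts at arbitrarily negative indices contains no
factor `a^p` and no factor `b^q`. -/
theorem admissible_no_large_blocks (p q r : ℕ)
    (hp : 3 ≤ p) (hq : 3 ≤ q) (hr : 3 ≤ r)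
    (hineq : (1 : ℝ) / p + 1 / q + 1 / r < 1)
    (w : ℤ → Letter)
    (hadm : AdmissibleZ (uLknead p r) (pre la (vRknead q r)) (pre lb (uLknead p r))
      (vRknead q r) w)
    (hneg : ∀ k : ℤ, ∃ j ≤ k, w (j - 1) ≠ w j) :
    ¬ containsZ w (List.replicate p la) ∧ ¬ containsZ w (List.replicate q lb) := by
  refine ⟨fun h => ?_, fun h => ?_⟩
  · obtain ⟨j, hj, hs⟩ := exists_blockStart_of_containsZ hneg (by omega) h
    have hw : w j = la := by simpa [shiftZ] using hs 0 (by omega)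
    exact not_lexLe_of_beginsWith (by omega) (beginsWith_uLknead p hr) hs ((hadm j hj).1 hw).1
  · obtain ⟨j, hj, hs⟩ := exists_blockStart_of_containsZ hneg (by omega) h
    have hw : w j = lb := by simpa [shiftZ] using hs 0 (by omega)
    exact not_lexLt_of_beginsWith (by omega) (beginsWith_vRknead q hr) hs ((hadm j hj).2 hw).2
end

section
/- Let p, q, r be integers with p, q, r ≥ 3 and 1/p + 1/q + 1/r < 1. Let w : ℤ → {a, b} be an admissible bi-infinite word having block starts at arbitrarily negative indices (for every k ∈ ℤ there exists j ≤ k with w(j-1) ≠ w(j)). Then w contains no factor equal to (a^{p-1}b)^{⌈r/2⌉} and no factor equal to (b^{q-1}a)^{⌈r/2⌉}. -/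
theorem pw_add (x : List Letter) (m n : ℕ) : pw x (m + n) = pw x m ++ pw x n := by
  induction m with
  | zero => simp [pw]
  | succ m ih => rw [Nat.add_right_comm]; simp [pw, ih]

theorem pw_one (x : List Letter) : pw x 1 = x := by simp [pw]

theorem per_lt_length (P R : List Letter) (d : Letter) (i : ℕ) (hi : i < P.length) :
    per (P ++ d :: R) i = P.getD i la := by
  unfold per
  rw [Nat.mod_eq_of_lt (by simp; omega), List.getD_append _ _ _ _ hi]

theorem per_length (P R : List Letter) (d : Letter) : per (P ++ d :: R) P.length = d := by
  unfold per
  rw [Nat.mod_eq_of_lt (by simp), List.getD_append_right _ _ _ _ le_rfl]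
  simp

theorem not_lexLe_of_lexLt {x y : ℕ → Letter} (h : lexLt x y) : ¬ lexLe y x := by
  obtain ⟨n, hn, hx, hy⟩ := h
  rintro (⟨m, hm, hy', hx'⟩ | rfl)
  · rcases lt_trichotomy n m with hlt | rfl | hlt
    · have := hm n hlt
      simp_all [la, lb]
    · simp_all [la, lb]
    · have := hn m hlt
      simp_all [la, lb]
  · simp_all [la, lb]

/-- If some block starts at `k - d`, then the run of equal letters containing index `k` has
a first index `j`. -/
theorem exists_run_start (w : ℤ → Letter) (c : Letter) (d : ℕ) :
    ∀ k : ℤ, w k = c → w (k - d - 1) ≠ w (k - d) →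
      ∃ j ≤ k, w (j - 1) ≠ w j ∧ ∀ i, j ≤ i → i ≤ k → w i = c := by
  induction d with
  | zero =>
    intro k hk h
    refine ⟨k, le_rfl, by simpa using h, fun i h1 h2 => ?_⟩
    rw [le_antisymm h2 h1, hk]
  | succ d ih =>
    intro k hk h
    by_cases h1 : w (k - 1) = c
    · obtain ⟨j, hj, hs, hrun⟩ := ih (k - 1) h1 (by
        rwa [show k - 1 - (d : ℤ) = k - (d + 1 : ℕ) by push_cast; ring])
      refine ⟨j, by omega, hs, fun i hi hik => ?_⟩
      rcases eq_or_lt_of_le hik with rfl | hlt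
      · exact hk
      · exact hrun i hi (by omega)
    · refine ⟨k, le_rfl, by rwa [hk], fun i h1 h2 => ?_⟩
      rw [le_antisymm h2 h1, hk]

/-- The core argument. The hypothesis `hadm` says that, at a block start of `w` with letter `c`,
the word `w` cannot first differ from `L^∞` by having `c` where `L^∞` has `d`. An occurrence of
`X = Pc⋯` at a block start does this, since `L = Pd⋯`; an occurrence elsewhere extends to a run of
more than `n + 1` letters `c`, which does it too, since `L = c^(n+1)d⋯`. -/
theorem not_contains_of_common_prefix (w : ℤ → Letter) (c d : Letter) (n : ℕ)
    (L X P R S R' S' : List Letter)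
    (hL : L = P ++ d :: R) (hL' : L = List.replicate (n + 1) c ++ d :: R')
    (hX : X = P ++ c :: S) (hX' : X = List.replicate (n + 1) c ++ S')
    (hadm : ∀ k, w (k - 1) ≠ w k → w k = c → ∀ N : ℕ,
      (∀ m : ℕ, m < N → w (k + m) = per L m) → w (k + N) = c → per L N = d → False)
    (hneg : ∀ k : ℤ, ∃ j ≤ k, w (j - 1) ≠ w j) : ¬ containsZ w X := by
  rintro ⟨k, hk⟩
  have hrun : ∀ i : ℕ, i < n + 1 → w (k + i) = c := fun i hi => by
    rw [hk i (by rw [hX']; simp; omega), hX', List.getD_append _ _ _ _ (by simpa using hi),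
      List.getD_replicate _ hi]
  have hk0 : w k = c := by simpa using hrun 0 (by omega)
  obtain ⟨j0, hj0, hs0⟩ := hneg k
  obtain ⟨j, hjk, hs, hj⟩ := exists_run_start w c (k - j0).toNat k hk0 (by
    rw [Int.toNat_of_nonneg (by omega), sub_sub_cancel]; exact hs0)
  have hjc : w j = c := hj j le_rfl hjk
  rcases eq_or_lt_of_le hjk with rfl | hlt
  · refine hadm j hs hjc P.length (fun m hm => ?_) ?_ (by rw [hL, per_length])
    · rw [hk m (by rw [hX]; simp; omega), hX, hL, per_lt_length _ _ _ _ hm,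
        List.getD_append _ _ _ _ hm]
    · rw [hk _ (by rw [hX]; simp), hX, List.getD_append_right _ _ _ _ le_rfl]
      simp
  · -- The run of `c` starting at `j < k` has at least `n + 2` letters.
    have hlong : ∀ m : ℕ, m ≤ n + 1 → w (j + m) = c := fun m hm => by
      rcases le_or_gt (j + m) k with h | h
      · exact hj _ (by omega) h
      · have := hrun (j + m - k).toNat (by omega)
        rwa [Int.toNat_of_nonneg (by omega), add_sub_cancel] at this
    refine hadm j hs hjc (n + 1) (fun m hm => ?_) (hlong _ le_rfl) ?_
    · rw [hlong m hm.le, hL', per_lt_length _ _ _ _ (by simpa using hm),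
        List.getD_replicate _ hm]
    · have := per_length (List.replicate (n + 1) c) R' d
      rwa [List.length_replicate, ← hL'] at this

/-- The comparisons for odd `r = 2h + 3` and block `c^(n+1)d`: the kneading word begins with
`(c^(n+1)d)^(h+1)d`. -/
theorem kneading_run_odd (w : ℤ → Letter) (c d : Letter) (n h : ℕ)
    (hadm : ∀ k, w (k - 1) ≠ w k → w k = c → ∀ N : ℕ,
      (∀ m : ℕ, m < N → w (k + m) = per (pw (List.replicate (n + 1) c ++ [d]) h ++
        (List.replicate (n + 1) c ++ [d, d])) m) → w (k + N) = c →
      per (pw (List.replicate (n + 1) c ++ [d]) h ++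
        (List.replicate (n + 1) c ++ [d, d])) N = d → False)
    (hneg : ∀ k : ℤ, ∃ j ≤ k, w (j - 1) ≠ w j) :
    ¬ containsZ w (pw (List.replicate (n + 1) c ++ [d]) (h + 2)) := by
  have hstart : ∃ R', pw (List.replicate (n + 1) c ++ [d]) h ++
      (List.replicate (n + 1) c ++ [d, d]) = List.replicate (n + 1) c ++ d :: R' := by
    cases h with
    | zero => exact ⟨[d], by simp [pw]⟩
    | succ h => exact ⟨_, by
      simp only [pw, List.append_assoc, List.cons_append, List.nil_append]; rfl⟩
  obtain ⟨R', hR'⟩ := hstart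
  refine not_contains_of_common_prefix w c d n _ _
    (pw (List.replicate (n + 1) c ++ [d]) h ++ (List.replicate (n + 1) c ++ [d]))
    [] (List.replicate n c ++ [d]) R' (d :: pw (List.replicate (n + 1) c ++ [d]) (h + 1))
    ?_ hR' ?_ ?_ hadm hneg
  · simp
  · rw [pw_add]
    simp [pw, List.replicate_succ]
  · simp [pw]

/-- The comparisons for even `r = 2h + 4` and block `c^(n+2)d`: the kneading word begins with
`(c^(n+2)d)^(h+1)c^(n+1)d`. -/
theorem kneading_run_even (w : ℤ → Letter) (c d : Letter) (n h : ℕ)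
    (hadm : ∀ k, w (k - 1) ≠ w k → w k = c → ∀ N : ℕ,
      (∀ m : ℕ, m < N → w (k + m) = per (pw (List.replicate (n + 2) c ++ [d]) (h + 1) ++
        List.replicate (n + 1) c ++ pw (d :: List.replicate (n + 2) c) (h + 1) ++ [d, d]) m) →
      w (k + N) = c →
      per (pw (List.replicate (n + 2) c ++ [d]) (h + 1) ++
        List.replicate (n + 1) c ++ pw (d :: List.replicate (n + 2) c) (h + 1) ++ [d, d]) N = d →
      False)
    (hneg : ∀ k : ℤ, ∃ j ≤ k, w (j - 1) ≠ w j) :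
    ¬ containsZ w (pw (List.replicate (n + 2) c ++ [d]) (h + 2)) := by
  refine not_contains_of_common_prefix w c d (n + 1) _ _
    (pw (List.replicate (n + 2) c ++ [d]) (h + 1) ++ List.replicate (n + 1) c)
    (List.replicate (n + 2) c ++ pw (d :: List.replicate (n + 2) c) h ++ [d, d])
    [d]
    (pw (List.replicate (n + 2) c ++ [d]) h ++ List.replicate (n + 1) c ++
      pw (d :: List.replicate (n + 2) c) (h + 1) ++ [d, d])
    (d :: pw (List.replicate (n + 2) c ++ [d]) (h + 1))
    ?_ ?_ ?_ ?_ hadm hneg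
  · simp [pw]
  · simp [pw]
  · rw [show h + 2 = (h + 1) + 1 from rfl, pw_add _ (h + 1) 1, pw_one,
      List.replicate_succ' (n := n + 1)]
    simp
  · simp [pw]

/-- For `p, q, r ≥ 3` with `1/p + 1/q + 1/r < 1`, an admissible
bi-infinite word having block starts at arbitrarily negative indices contains no
factor `(a^{p-1}b)^{⌈r/2⌉}` and no factor `(b^{q-1}a)^{⌈r/2⌉}`
(here `⌈r/2⌉ = (r+1)/2` in natural division). -/
theorem admissible_no_long_bigon_run (p q r : ℕ)
    (hp : 3 ≤ p) (hq : 3 ≤ q) (hr : 3 ≤ r)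
    (hineq : (1 : ℝ) / p + 1 / q + 1 / r < 1)
    (w : ℤ → Letter)
    (hadm : AdmissibleZ (uLknead p r) (pre la (vRknead q r)) (pre lb (uLknead p r))
      (vRknead q r) w)
    (hneg : ∀ k : ℤ, ∃ j ≤ k, w (j - 1) ≠ w j) :
    ¬ containsZ w (pw (List.replicate (p - 1) la ++ [lb]) ((r + 1) / 2)) ∧
    ¬ containsZ w (pw (List.replicate (q - 1) lb ++ [la]) ((r + 1) / 2)) := by
  -- Admissibility at a block start, as the absence of a first discrepancy with `u_L` resp. `v_R`.
  have hA : ∀ k, w (k - 1) ≠ w k → w k = la → ∀ N : ℕ,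
      (∀ m : ℕ, m < N → w (k + m) = uLknead p r m) → w (k + N) = la →
      uLknead p r N = lb → False := fun k hs hc N hm h1 h2 =>
    not_lexLe_of_lexLt ⟨N, hm, h1, h2⟩ ((hadm k hs).1 hc).1
  have hB : ∀ k, w (k - 1) ≠ w k → w k = lb → ∀ N : ℕ,
      (∀ m : ℕ, m < N → w (k + m) = vRknead q r m) → w (k + N) = lb →
      vRknead q r N = la → False := fun k hs hc N hm h1 h2 =>
    not_lexLe_of_lexLt ((hadm k hs).2 hc).2 (.inl ⟨N, fun m h => (hm m h).symm, h2, h1⟩)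
  clear hadm
  obtain ⟨p, rfl⟩ := Nat.exists_eq_add_of_le' hp
  obtain ⟨q, rfl⟩ := Nat.exists_eq_add_of_le' hq
  by_cases hodd : Odd r
  · obtain ⟨h, rfl⟩ : ∃ h, r = 2 * h + 3 := by
      obtain ⟨t, rfl⟩ := hodd
      exact ⟨t - 1, by omega⟩
    simp only [uLknead, vRknead, if_pos hodd, uLodd, vRodd,
      show (2 * h + 3 - 3) / 2 = h by omega] at hA hB
    rw [show (2 * h + 3 + 1) / 2 = h + 2 by omega]
    exact ⟨kneading_run_odd w la lb (p + 1) h hA hneg, kneading_run_odd w lb la (q + 1) h hB hneg⟩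
  · obtain ⟨h, rfl⟩ : ∃ h, r = 2 * h + 4 := by
      obtain ⟨t, rfl⟩ := Nat.not_odd_iff_even.mp hodd
      exact ⟨t - 2, by omega⟩
    simp only [uLknead, vRknead, if_neg hodd, uLeven, vReven,
      show (2 * h + 4 - 2) / 2 = h + 1 by omega] at hA hB
    rw [show (2 * h + 4 + 1) / 2 = h + 2 by omega]
    exact ⟨kneading_run_even w la lb p h hA hneg, kneading_run_even w lb la q h hB hneg⟩
end
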